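/- arXiv:math/0310456 — 2 statements merged into one kernel-verified Lean document; each statement's English description precedes it below -/
import Mathlib

section
/- A continuous map f : X → Y of topological spaces is a Serre fibration if and only if the induced map S(f) : S(X) → S(Y) between singular simplicial sets is a Kan fibration. -/
open CategoryTheory Simplicial

namespace HopfModel

/-- A map of simplicial sets is a *Kan fibration* if it has the right lifting property
with respect to all horn inclusions `Λ[n, k] ⟶ Δ[n]` for `n ≥ 1`, `0 ≤ k ≤ n`. -/
def IsKanFibration {X Y : SSet} (p : X ⟶ Y) : Prop :=
  ∀ (n : ℕ) (i : Fin (n + 2)), HasLiftingProperty (SSet.horn (n + 1) i).ι p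

/-- The closed unit disk `Dⁿ ⊆ ℝⁿ`. -/
noncomputable def disk (n : ℕ) : TopCat :=
  TopCat.of (Metric.closedBall (0 : EuclideanSpace ℝ (Fin n)) 1)

/-- The inclusion `Dⁿ × {0} ↪ Dⁿ × [0,1]`. -/
noncomputable def diskInclusion (n : ℕ) :
    disk n ⟶ TopCat.of (↥(Metric.closedBall (0 : EuclideanSpace ℝ (Fin n)) 1) × unitInterval) :=
  TopCat.ofHom (ContinuousMap.mk (fun x => (x, 0)) (by continuity))

/-- A continuous map is a *Serre fibration* if it has the homotopy lifting property with
respect to all disks `Dⁿ`, i.e. the right lifting property with respect to all inclusions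
`Dⁿ × {0} ↪ Dⁿ × [0,1]`. -/
def IsSerreFibration {X Y : TopCat} (f : X ⟶ Y) : Prop :=
  ∀ n : ℕ, HasLiftingProperty (diskInclusion n) f

end HopfModel

/-!
The topological horn `|Λ|` is the union of its facets glued along common faces, just as `Λ` is, so
it corepresents maps `Λ ⟶ S(X)`; hence `S(f)` lifts against `Λ ⟶ Δ` iff `f` lifts against
`|Λ| ⟶ |Δ|`. The inclusion `|Λ| ⟶ |Δ|` is a retract of `Dⁿ ⟶ Dⁿ × [0,1]`, because projecting the
simplex onto the horn along parallel lines displays it inside a cylinder, and `Dⁿ ⟶ Dⁿ × [0,1]` is a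
retract of the inclusion of the `0`-th horn, because a small cylinder over the disk embeds along the
same lines. Lifting properties are inherited by retracts.
-/

namespace HopfModel

open Opposite Topology

section Lifting

universe v₁ v₂ u₁ u₂

variable {C : Type u₁} [Category.{v₁} C] {D : Type u₂} [Category.{v₁} D] {G : D ⥤ C}

theorem hasLiftingProperty_map_iff_of_corepresentableBy {A B : C} {A' B' : D}
    {i : A ⟶ B} {i' : A' ⟶ B'}
    (α : (G ⋙ coyoneda.obj (op A)).CorepresentableBy A')
    (β : (G ⋙ coyoneda.obj (op B)).CorepresentableBy B')
    (h : ∀ ⦃Z : D⦄ (g : B' ⟶ Z), α.homEquiv (i' ≫ g) = i ≫ β.homEquiv g)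
    {X Y : D} (f : X ⟶ Y) :
    HasLiftingProperty i (G.map f) ↔ HasLiftingProperty i' f := by
  have hα {Z W : D} (u : A' ⟶ Z) (p : Z ⟶ W) : α.homEquiv (u ≫ p) = α.homEquiv u ≫ G.map p :=
    α.homEquiv_comp p u
  have hβ {Z W : D} (u : B' ⟶ Z) (p : Z ⟶ W) : β.homEquiv (u ≫ p) = β.homEquiv u ≫ G.map p :=
    β.homEquiv_comp p u
  constructor
  · refine fun _ => ⟨fun {u v} sq => ?_⟩
    have sq' : CommSq (α.homEquiv u) i (G.map f) (β.homEquiv v) :=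
      ⟨by rw [← hα, sq.w, h]⟩
    obtain ⟨l, hl⟩ := β.homEquiv.surjective sq'.lift
    refine ⟨⟨⟨l, α.homEquiv.injective ?_, β.homEquiv.injective ?_⟩⟩⟩
    · rw [h, hl, sq'.fac_left]
    · rw [hβ, hl, sq'.fac_right]
  · refine fun _ => ⟨fun {u v} sq => ?_⟩
    obtain ⟨u, rfl⟩ := α.homEquiv.surjective u
    obtain ⟨v, rfl⟩ := β.homEquiv.surjective v
    have sq' : CommSq u i' f v := ⟨α.homEquiv.injective (by rw [hα, h]; exact sq.w)⟩
    refine ⟨⟨⟨β.homEquiv sq'.lift, ?_, ?_⟩⟩⟩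
    · rw [← h, sq'.fac_left]
    · exact (hβ _ _).symm.trans (congrArg _ sq'.fac_right)

end Lifting

section Faces

variable {S : Type*} [Semiring S] [PartialOrder S] [IsOrderedRing S]
  {ι κ : Type*} [Fintype ι] [Fintype κ] {e : ι → κ}

lemma stdSimplex_map_apply_of_injective (he : Function.Injective e) (a : stdSimplex S ι)
    (x : ι) : stdSimplex.map e a (e x) = a x := by
  classical
  simp [FunOnFinite.linearMap_apply_apply, he.eq_iff, Finset.sum_filter]

lemma stdSimplex_map_apply_of_notMem_range (a : stdSimplex S ι) {y : κ}
    (hy : y ∉ Set.range e) : stdSimplex.map e a y = 0 := by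
  classical
  rw [stdSimplex.map_coe, FunOnFinite.linearMap_apply_apply, Finset.filter_false_of_mem,
    Finset.sum_empty]
  exact fun x _ hx => hy ⟨x, hx⟩

lemma stdSimplex_map_injective (he : Function.Injective e) :
    Function.Injective (stdSimplex.map (S := S) e) := fun a b hab => by
  ext x
  rw [← stdSimplex_map_apply_of_injective he a, hab, stdSimplex_map_apply_of_injective he]

lemma exists_stdSimplex_map_eq (he : Function.Injective e) {b : stdSimplex S κ}
    (hb : ∀ y ∉ Set.range e, b y = 0) : ∃ a : stdSimplex S ι, stdSimplex.map e a = b := by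
  refine ⟨⟨fun x => b (e x), fun x => b.2.1 _, ?_⟩, ?_⟩
  · rw [Fintype.sum_of_injective e he _ b hb fun _ => rfl, stdSimplex.sum_eq_one]
  · ext y
    by_cases hy : y ∈ Set.range e
    · obtain ⟨x, rfl⟩ := hy
      exact stdSimplex_map_apply_of_injective he _ x
    · rw [stdSimplex_map_apply_of_notMem_range _ hy, hb y hy]

lemma stdSimplex_map_succAbove_apply_self {n : ℕ} (j : Fin (n + 2))
    (a : stdSimplex S (Fin (n + 1))) : stdSimplex.map j.succAbove a j = 0 :=
  stdSimplex_map_apply_of_notMem_range a (by simp)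

lemma exists_stdSimplex_map_succAbove_eq {n : ℕ} {j : Fin (n + 2)}
    {b : stdSimplex S (Fin (n + 2))} (hb : b j = 0) : ∃ a, stdSimplex.map j.succAbove a = b :=
  exists_stdSimplex_map_eq Fin.succAbove_right_injective (by simpa using hb)

end Faces

section Slide

variable {ι : Type*} [Fintype ι]

lemma continuous_stdSimplex_apply (j : ι) : Continuous fun b : stdSimplex ℝ ι => b j :=
  (continuous_apply j).comp continuous_subtype_val

/-- The union of the facets of the topological simplex that contain the vertex `i`, i.e. the
topological counterpart of the horn `Λ[n, i]`. -/
def topHorn (i : ι) : Set (stdSimplex ℝ ι) := {b | ∃ j ≠ i, b j = 0}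

variable [DecidableEq ι] [Nontrivial ι] (i : ι)

lemma compl_singleton_nonempty : ({i}ᶜ : Finset ι).Nonempty :=
  (exists_ne i).imp fun _ hj => by simpa using hj

/-- The smallest barycentric coordinate other than the `i`-th, which measures how far a point
lies above `topHorn i`. -/
noncomputable def height (b : stdSimplex ℝ ι) : unitInterval :=
  ⟨({i}ᶜ : Finset ι).inf' (compl_singleton_nonempty i) b, by
    obtain ⟨j, -, hj⟩ := Finset.exists_mem_eq_inf' (compl_singleton_nonempty i) b
    rw [hj]
    exact ⟨stdSimplex.zero_le b j, stdSimplex.le_one b j⟩⟩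

lemma continuous_height : Continuous (height i) := by
  refine Continuous.subtype_mk ?_ _
  exact Continuous.finset_inf'_apply _ fun j _ => continuous_stdSimplex_apply j

lemma le_height_iff {b : stdSimplex ℝ ι} {r : ℝ} : r ≤ height i b ↔ ∀ j ≠ i, r ≤ b j := by
  simp [height]

lemma height_le (b : stdSimplex ℝ ι) {j : ι} (hj : j ≠ i) : (height i b : ℝ) ≤ b j :=
  (le_height_iff i).1 le_rfl j hj

lemma exists_height_eq (b : stdSimplex ℝ ι) : ∃ j ≠ i, (height i b : ℝ) = b j := by
  obtain ⟨j, hj, h⟩ := Finset.exists_mem_eq_inf' (compl_singleton_nonempty i) b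
  exact ⟨j, by simpa using hj, h⟩

lemma mem_topHorn_iff_height_eq_zero {b : stdSimplex ℝ ι} : b ∈ topHorn i ↔ height i b = 0 := by
  constructor
  · rintro ⟨j, hj, hb⟩
    exact le_antisymm (Subtype.coe_le_coe.1 ((height_le i b hj).trans hb.le)) unitInterval.nonneg'
  · intro h
    obtain ⟨j, hj, hb⟩ := exists_height_eq i b
    exact ⟨j, hj, by rw [← hb, h]; rfl⟩

/-- The distance by which `slide i b t` lowers every coordinate other than the `i`-th. -/
noncomputable def slideDrop (b : stdSimplex ℝ ι) (t : unitInterval) : ℝ :=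
  height i b - (min (height i b) t : unitInterval)

lemma continuous_slideDrop :
    Continuous fun p : stdSimplex ℝ ι × unitInterval => slideDrop i p.1 p.2 := by
  have h : Continuous fun p : stdSimplex ℝ ι × unitInterval => height i p.1 :=
    (continuous_height i).comp continuous_fst
  exact (continuous_subtype_val.comp h).sub
    (continuous_subtype_val.comp (h.min continuous_snd))

lemma slideDrop_nonneg (b : stdSimplex ℝ ι) (t : unitInterval) : 0 ≤ slideDrop i b t :=
  sub_nonneg.2 (Subtype.coe_le_coe.2 (min_le_left _ _))

lemma slideDrop_le_height (b : stdSimplex ℝ ι) (t : unitInterval) :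
    slideDrop i b t ≤ height i b :=
  sub_le_self _ unitInterval.nonneg'

/-- Push a point towards `topHorn i`, parallel to the line through the vertex `i` and the
barycenter, until its height is at most `t`. -/
noncomputable def slide (b : stdSimplex ℝ ι) (t : unitInterval) : stdSimplex ℝ ι :=
  ⟨fun j => b j + slideDrop i b t * ((Pi.single i (Fintype.card ι) : ι → ℝ) j - 1), by
    constructor
    · intro j
      beta_reduce
      rcases eq_or_ne j i with rfl | hj
      · have hcard : (1 : ℝ) ≤ Fintype.card ι := by exact_mod_cast Fintype.card_pos
        rw [Pi.single_eq_same]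
        exact add_nonneg (stdSimplex.zero_le b j)
          (mul_nonneg (slideDrop_nonneg j b t) (sub_nonneg.2 hcard))
      · rw [Pi.single_eq_of_ne hj]
        linarith [height_le i b hj, slideDrop_le_height i b t]
    · rw [Finset.sum_add_distrib, ← Finset.mul_sum, Finset.sum_sub_distrib,
        stdSimplex.sum_eq_one, Finset.sum_pi_single']
      simp⟩

lemma slide_apply_of_ne (b : stdSimplex ℝ ι) (t : unitInterval) {j : ι} (hj : j ≠ i) :
    slide i b t j = b j - slideDrop i b t := by
  change b j + _ * ((Pi.single i (Fintype.card ι) : ι → ℝ) j - 1) = _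
  rw [Pi.single_eq_of_ne hj]
  ring

lemma continuous_slide :
    Continuous fun p : stdSimplex ℝ ι × unitInterval => slide i p.1 p.2 := by
  refine Continuous.subtype_mk (continuous_pi fun j => ?_) _
  exact ((continuous_stdSimplex_apply j).comp continuous_fst).add
    ((continuous_slideDrop i).mul continuous_const)

lemma slide_eq_self_of_height_le {b : stdSimplex ℝ ι} {t : unitInterval} (h : height i b ≤ t) :
    slide i b t = b := by
  ext j
  change b j + slideDrop i b t * _ = b j
  rw [slideDrop, min_eq_left h, sub_self, zero_mul, add_zero]

lemma height_slide (b : stdSimplex ℝ ι) (t : unitInterval) :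
    height i (slide i b t) = min (height i b) t := by
  have hmin : (height i b : ℝ) - slideDrop i b t = (min (height i b) t : unitInterval) :=
    sub_sub_cancel _ _
  apply Subtype.ext
  rw [← hmin]
  apply le_antisymm
  · obtain ⟨j, hj, h⟩ := exists_height_eq i b
    rw [h, ← slide_apply_of_ne i b t hj]
    exact height_le i _ hj
  · refine (le_height_iff i).2 fun j hj => ?_
    rw [slide_apply_of_ne i b t hj]
    exact sub_le_sub_right (height_le i b hj) _

lemma slide_zero_mem_topHorn (b : stdSimplex ℝ ι) : slide i b 0 ∈ topHorn i := by
  rw [mem_topHorn_iff_height_eq_zero, height_slide]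
  exact min_eq_right unitInterval.nonneg'

lemma slide_zero_eq_self {b : stdSimplex ℝ ι} (hb : b ∈ topHorn i) : slide i b 0 = b :=
  slide_eq_self_of_height_le i ((mem_topHorn_iff_height_eq_zero i).1 hb).le

end Slide

section Gluing

lemma exists_continuousMap_of_compact_cover {α Z X : Type*} {K : α → Type*} [Finite α]
    [TopologicalSpace Z] [T2Space Z] [TopologicalSpace X] [∀ j, TopologicalSpace (K j)]
    [∀ j, CompactSpace (K j)] {e : ∀ j, C(K j, Z)} {g : ∀ j, C(K j, X)}
    (he : ∀ z, ∃ j a, e j a = z) (hg : ∀ j k a c, e j a = e k c → g j a = g k c) :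
    ∃ u : C(Z, X), ∀ j a, u (e j a) = g j a := by
  let E : C(Σ j, K j, Z) := ⟨fun p => e p.1 p.2, continuous_sigma fun j => (e j).continuous⟩
  let G : C(Σ j, K j, X) := ⟨fun p => g p.1 p.2, continuous_sigma fun j => (g j).continuous⟩
  have hE : IsQuotientMap E := by
    refine .of_surjective_continuous (fun z => ?_) E.continuous
    obtain ⟨j, a, h⟩ := he z
    exact ⟨⟨j, a⟩, h⟩
  have hG : Function.FactorsThrough G E := fun p p' => hg p.1 p'.1 p.2 p'.2
  exact ⟨hE.lift G hG, fun j a => DFunLike.congr_fun (hE.lift_comp G hG) ⟨j, a⟩⟩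

end Gluing

section Horns

variable {n : ℕ}

/-- The topological `n`-simplex. -/
abbrev topSimplex (n : ℕ) : TopCat := TopCat.of (stdSimplex ℝ (Fin (n + 1)))

/-- The inclusion of the facet of the topological simplex opposite to the vertex `j`. -/
noncomputable def faceInclusion (j : Fin (n + 2)) : topSimplex n ⟶ topSimplex (n + 1) :=
  TopCat.ofHom ⟨stdSimplex.map j.succAbove, stdSimplex.continuous_map _⟩

/-- The topological `n`-simplex represents maps from `Δ[n]` into singular simplicial sets. -/
noncomputable def simplexCorepresentableBy (n : ℕ) :
    (TopCat.toSSet.{0} ⋙ coyoneda.obj (op Δ[n])).CorepresentableBy (topSimplex n) where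
  homEquiv {X} := ConcreteCategory.homEquiv.trans
    ((X.toSSetObjEquiv (op ⦋n⦌)).symm.trans SSet.yonedaEquiv.symm)
  homEquiv_comp _ _ := rfl

lemma δ_comp_simplexCorepresentableBy_homEquiv (j : Fin (n + 2)) {X : TopCat}
    (g : topSimplex (n + 1) ⟶ X) :
    SSet.stdSimplex.δ j ≫ (simplexCorepresentableBy (n + 1)).homEquiv g =
      (simplexCorepresentableBy n).homEquiv (faceInclusion j ≫ g) :=
  SSet.stdSimplex.δ_comp_yonedaEquiv_symm _ j

/-- The inclusion of the topological horn into the topological simplex. -/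
def hornInclusion (i : Fin (n + 2)) : TopCat.of (topHorn i) ⟶ topSimplex (n + 1) :=
  TopCat.ofHom ⟨Subtype.val, continuous_subtype_val⟩

/-- The projection of the topological simplex onto the topological horn `topHorn i`, parallel to
the line through the vertex `i` and the barycenter. -/
noncomputable def hornRetraction (i : Fin (n + 2)) : topSimplex (n + 1) ⟶ TopCat.of (topHorn i) :=
  TopCat.ofHom ⟨fun b => ⟨slide i b 0, slide_zero_mem_topHorn i b⟩,
    ((continuous_slide i).comp (continuous_id.prodMk continuous_const)).subtype_mk _⟩

lemma hornInclusion_comp_hornRetraction (i : Fin (n + 2)) :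
    hornInclusion i ≫ hornRetraction i = 𝟙 _ := by
  refine TopCat.hom_ext (ContinuousMap.ext fun b => Subtype.ext ?_)
  exact slide_zero_eq_self i b.2

variable {i : Fin (n + 2)}

/-- The inclusion of the facet opposite to the vertex `j ≠ i` into the topological horn. -/
noncomputable def hornFace (j : Fin (n + 2)) (hj : j ≠ i) :
    topSimplex n ⟶ TopCat.of (topHorn i) :=
  TopCat.ofHom ⟨fun a => ⟨stdSimplex.map j.succAbove a,
    j, hj, stdSimplex_map_succAbove_apply_self j a⟩,
    (stdSimplex.continuous_map _).subtype_mk _⟩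

lemma hornFace_comp_hornInclusion (j : Fin (n + 2)) (hj : j ≠ i) :
    hornFace j hj ≫ hornInclusion i = faceInclusion j := rfl

lemma faceInclusion_comp_hornRetraction (j : Fin (n + 2)) (hj : j ≠ i) :
    faceInclusion j ≫ hornRetraction i = hornFace j hj := by
  rw [← hornFace_comp_hornInclusion j hj, Category.assoc, hornInclusion_comp_hornRetraction,
    Category.comp_id]

lemma exists_hornFace_apply_eq (b : topHorn i) : ∃ j, ∃ hj : j ≠ i, ∃ a, hornFace j hj a = b := by
  obtain ⟨b, j, hj, hb⟩ := b
  obtain ⟨a, rfl⟩ := exists_stdSimplex_map_succAbove_eq hb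
  exact ⟨j, hj, a, rfl⟩

lemma topHorn_hom_ext {X : TopCat} {g h : TopCat.of (topHorn i) ⟶ X}
    (H : ∀ j (hj : j ≠ i), hornFace j hj ≫ g = hornFace j hj ≫ h) : g = h := by
  ext b
  obtain ⟨j, hj, a, rfl⟩ := exists_hornFace_apply_eq b
  exact ConcreteCategory.congr_hom (H j hj) a

lemma exists_topHorn_desc {X : TopCat} (g : ∀ j : Fin (n + 2), j ≠ i → (topSimplex n ⟶ X))
    (hg : ∀ j hj k hk a c, hornFace (i := i) j hj a = hornFace k hk c → g j hj a = g k hk c) :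
    ∃ u : TopCat.of (topHorn i) ⟶ X, ∀ j hj, hornFace j hj ≫ u = g j hj := by
  obtain ⟨u, hu⟩ := exists_continuousMap_of_compact_cover
    (e := fun j : {j // j ≠ i} => (hornFace j.1 j.2).hom) (g := fun j => (g j.1 j.2).hom)
    (fun b => by
      obtain ⟨j, hj, a, h⟩ := exists_hornFace_apply_eq b
      exact ⟨⟨j, hj⟩, a, h⟩)
    (fun j k => hg j.1 j.2 k.1 k.2)
  exact ⟨TopCat.ofHom u, fun j hj => TopCat.hom_ext (ContinuousMap.ext (hu ⟨j, hj⟩))⟩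

lemma exists_eq_faces_of_faces_eq {j k : Fin (n + 2)} (hjk : j ≤ k)
    {a c : stdSimplex ℝ (Fin (n + 2))}
    (h : stdSimplex.map j.castSucc.succAbove a = stdSimplex.map k.succ.succAbove c) :
    ∃ d, a = stdSimplex.map k.succAbove d ∧ c = stdSimplex.map j.succAbove d := by
  have ha : a k = 0 := by
    rw [← stdSimplex_map_apply_of_injective (Fin.succAbove_right_injective (p := j.castSucc)) a,
      Fin.succAbove_castSucc_of_le _ _ hjk, h, stdSimplex_map_succAbove_apply_self]
  obtain ⟨d, rfl⟩ := exists_stdSimplex_map_succAbove_eq ha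
  have hδ : k.succ.succAbove ∘ j.succAbove = j.castSucc.succAbove ∘ k.succAbove :=
    funext fun x => congrArg (fun q => q.toOrderHom x) (SimplexCategory.δ_comp_δ hjk)
  refine ⟨d, rfl, stdSimplex_map_injective (Fin.succAbove_right_injective (p := k.succ)) ?_⟩
  rw [← h, stdSimplex.map_comp_apply, stdSimplex.map_comp_apply, hδ]

lemma horn_faces_compatible_of_lt {X : TopCat}
    (φ : (Λ[n + 1, i] : SSet) ⟶ TopCat.toSSet.obj X)
    {g : ∀ j : Fin (n + 2), j ≠ i → (topSimplex n ⟶ X)}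
    (hg : ∀ j hj, (simplexCorepresentableBy n).homEquiv (g j hj) = SSet.horn.ι i j hj ≫ φ)
    {j k : Fin (n + 2)} (hj : j ≠ i) (hk : k ≠ i) (hjk : j < k)
    {a c : stdSimplex ℝ (Fin (n + 1))} (h : faceInclusion j a = faceInclusion k c) :
    g j hj a = g k hk c := by
  obtain _ | n := n
  · lia
  obtain ⟨j, rfl⟩ := j.eq_castSucc_of_ne_last (Fin.ne_last_of_lt hjk)
  obtain ⟨k, rfl⟩ := k.eq_succ_of_ne_zero (Fin.ne_zero_of_lt hjk)
  obtain ⟨d, rfl, rfl⟩ := exists_eq_faces_of_faces_eq (Fin.castSucc_lt_succ_iff.1 hjk) h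
  have hfaces : faceInclusion k ≫ g j.castSucc hj = faceInclusion j ≫ g k.succ hk := by
    have hφ := SSet.horn.IsCompatible.δ_pred_comp (SSet.horn.IsCompatible.of_hom φ)
      j.castSucc k.succ hj hk hjk
    apply (simplexCorepresentableBy n).homEquiv.injective
    rwa [Fin.pred_succ, Fin.castPred_castSucc, ← hg, ← hg,
      δ_comp_simplexCorepresentableBy_homEquiv, δ_comp_simplexCorepresentableBy_homEquiv] at hφ
  change g _ hj (faceInclusion k d) = g _ hk (faceInclusion j d)
  rw [← ConcreteCategory.comp_apply, hfaces, ConcreteCategory.comp_apply]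

lemma horn_faces_compatible {X : TopCat}
    (φ : (Λ[n + 1, i] : SSet) ⟶ TopCat.toSSet.obj X)
    {g : ∀ j : Fin (n + 2), j ≠ i → (topSimplex n ⟶ X)}
    (hg : ∀ j hj, (simplexCorepresentableBy n).homEquiv (g j hj) = SSet.horn.ι i j hj ≫ φ)
    {j k : Fin (n + 2)} (hj : j ≠ i) (hk : k ≠ i)
    {a c : stdSimplex ℝ (Fin (n + 1))} (h : faceInclusion j a = faceInclusion k c) :
    g j hj a = g k hk c := by
  rcases lt_trichotomy j k with hjk | rfl | hjk
  · exact horn_faces_compatible_of_lt φ hg hj hk hjk h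
  · rw [stdSimplex_map_injective Fin.succAbove_right_injective h]
  · exact (horn_faces_compatible_of_lt φ hg hk hj hjk h.symm).symm

/-- The map from `Λ[n + 1, i]` to the singular simplicial set of `X` adjoint to a continuous map
out of the topological horn, obtained by extending the latter to the simplex. Its faces, hence the
whole map, do not depend on how it is extended. -/
noncomputable def hornToSSet {X : TopCat} (g : TopCat.of (topHorn i) ⟶ X) :
    (Λ[n + 1, i] : SSet) ⟶ TopCat.toSSet.obj X :=
  Λ[n + 1, i].ι ≫ (simplexCorepresentableBy (n + 1)).homEquiv (hornRetraction i ≫ g)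

lemma horn_ι_comp_hornToSSet {X : TopCat} (g : TopCat.of (topHorn i) ⟶ X) (j : Fin (n + 2))
    (hj : j ≠ i) : SSet.horn.ι i j hj ≫ hornToSSet g =
      (simplexCorepresentableBy n).homEquiv (hornFace j hj ≫ g) := by
  rw [hornToSSet, SSet.horn.ι_ι_assoc, δ_comp_simplexCorepresentableBy_homEquiv,
    ← Category.assoc, faceInclusion_comp_hornRetraction j hj]

lemma hornToSSet_bijective (X : TopCat) :
    Function.Bijective (hornToSSet : (TopCat.of (topHorn i) ⟶ X) → _) := by
  constructor
  · refine fun g h hgh => topHorn_hom_ext fun j hj => ?_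
    apply (simplexCorepresentableBy n).homEquiv.injective
    rw [← horn_ι_comp_hornToSSet, ← horn_ι_comp_hornToSSet, hgh]
  · intro φ
    let g (j : Fin (n + 2)) (hj : j ≠ i) : topSimplex n ⟶ X :=
      (simplexCorepresentableBy n).homEquiv.symm (SSet.horn.ι i j hj ≫ φ)
    have hg (j hj) : (simplexCorepresentableBy n).homEquiv (g j hj) = SSet.horn.ι i j hj ≫ φ :=
      Equiv.apply_symm_apply _ _
    obtain ⟨u, hu⟩ := exists_topHorn_desc g fun j hj k hk a c h =>
      horn_faces_compatible φ hg hj hk (congrArg Subtype.val h)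
    refine ⟨u, SSet.horn.hom_ext' fun j hj => ?_⟩
    rw [horn_ι_comp_hornToSSet, hu, hg]

/-- The topological horn represents maps from the horn into singular simplicial sets. -/
noncomputable def hornCorepresentableBy (i : Fin (n + 2)) :
    (TopCat.toSSet.{0} ⋙ coyoneda.obj (op (Λ[n + 1, i] : SSet))).CorepresentableBy
      (TopCat.of (topHorn i)) where
  homEquiv {X} := Equiv.ofBijective hornToSSet (hornToSSet_bijective X)
  homEquiv_comp _ _ := rfl

lemma hornToSSet_hornInclusion_comp {X : TopCat} (g : topSimplex (n + 1) ⟶ X) :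
    hornToSSet (hornInclusion i ≫ g) =
      Λ[n + 1, i].ι ≫ (simplexCorepresentableBy (n + 1)).homEquiv g := by
  refine SSet.horn.hom_ext' fun j hj => ?_
  rw [horn_ι_comp_hornToSSet, SSet.horn.ι_ι_assoc, δ_comp_simplexCorepresentableBy_homEquiv,
    ← hornFace_comp_hornInclusion j hj, Category.assoc]

theorem hasLiftingProperty_horn_ι_toSSet_map_iff (i : Fin (n + 2)) {X Y : TopCat} (f : X ⟶ Y) :
    HasLiftingProperty Λ[n + 1, i].ι (TopCat.toSSet.map f) ↔
      HasLiftingProperty (hornInclusion i) f :=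
  hasLiftingProperty_map_iff_of_corepresentableBy (hornCorepresentableBy i)
    (simplexCorepresentableBy (n + 1)) (fun _ => hornToSSet_hornInclusion_comp) f

end Horns

section Retracts

/-- The inclusion of `A` as the bottom of the cylinder `A × [0,1]`. -/
def cylinderInclusion (A : TopCat) : A ⟶ TopCat.of (A × unitInterval) :=
  TopCat.ofHom ⟨fun a => (a, 0), by fun_prop⟩

/-- The map induced on cylinders by a continuous map. -/
def cylinderMap {A B : TopCat} (f : A ⟶ B) :
    TopCat.of (A × unitInterval) ⟶ TopCat.of (B × unitInterval) :=
  TopCat.ofHom (f.hom.prodMap (ContinuousMap.id _))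

/-- Functoriality of `cylinderInclusion` in retracts. -/
def cylinderRetractArrow {A B : TopCat} (h : Retract A B) :
    RetractArrow (cylinderInclusion A) (cylinderInclusion B) where
  i := Arrow.homMk h.i (cylinderMap h.i) rfl
  r := Arrow.homMk h.r (cylinderMap h.r) rfl
  retract := by
    refine Arrow.hom_ext _ _ h.retract ?_
    refine TopCat.hom_ext (ContinuousMap.ext fun p => Prod.ext ?_ rfl)
    exact ConcreteCategory.congr_hom h.retract p.1

/-- The inclusion of the topological horn as a retract of the bottom of the cylinder over the
simplex: a point of the simplex is placed at its own height, and `slide` maps the cylinder back. -/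
noncomputable def hornRetractArrowCylinder {n : ℕ} (i : Fin (n + 2)) :
    RetractArrow (hornInclusion i) (cylinderInclusion (topSimplex (n + 1))) where
  i := Arrow.homMk (hornInclusion i)
    (TopCat.ofHom ⟨fun b => (b, height i b), continuous_id.prodMk (continuous_height i)⟩) <| by
      ext b
      exact Prod.ext rfl ((mem_topHorn_iff_height_eq_zero i).1 b.2).symm
  r := Arrow.homMk (hornRetraction i) (TopCat.ofHom ⟨fun p => slide i p.1 p.2, continuous_slide i⟩)
    rfl
  retract := by
    refine Arrow.hom_ext _ _ (hornInclusion_comp_hornRetraction i) ?_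
    refine TopCat.hom_ext (ContinuousMap.ext fun b => ?_)
    exact slide_eq_self_of_height_le i le_rfl

lemma exists_retraction_stdSimplex (ι : Type*) [Fintype ι] [Nonempty ι] :
    ∃ r : C(ι → ℝ, stdSimplex ℝ ι), ∀ b : stdSimplex ℝ ι, r b = b := by
  -- Adding the defect to every coordinate keeps the sum of the weights away from zero.
  let defect (x : ι → ℝ) : ℝ := |1 - ∑ j, (|x j|)|
  let weight (x : ι → ℝ) (j : ι) : ℝ := |x j| + defect x
  have hweight (x j) : 0 ≤ weight x j := add_nonneg (abs_nonneg _) (abs_nonneg _)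
  have hsum (x : ι → ℝ) : 0 < ∑ j, weight x j := by
    have hcard : (1 : ℝ) ≤ Fintype.card ι := by exact_mod_cast Fintype.card_pos
    calc (0 : ℝ) < 1 := zero_lt_one
      _ ≤ ∑ j, |x j| + defect x := sub_le_iff_le_add'.1 (le_abs_self _)
      _ ≤ ∑ j, |x j| + Fintype.card ι * defect x := by
        gcongr
        exact le_mul_of_one_le_left (abs_nonneg _) hcard
      _ = ∑ j, weight x j := by
        simp only [weight, Finset.sum_add_distrib, Finset.sum_const, Finset.card_univ,
          nsmul_eq_mul]
  let r (x : ι → ℝ) : stdSimplex ℝ ι :=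
    ⟨fun j => weight x j / ∑ k, weight x k, fun j => div_nonneg (hweight x j) (hsum x).le, by
      rw [← Finset.sum_div, div_self (hsum x).ne']⟩
  have hr : Continuous r := by
    refine Continuous.subtype_mk (continuous_pi fun j => ?_) _
    exact Continuous.div (by fun_prop) (by fun_prop) fun x => (hsum x).ne'
  refine ⟨⟨r, hr⟩, fun b => ?_⟩
  have habs (j) : |b j| = b j := abs_of_nonneg (stdSimplex.zero_le b j)
  have hdefect : defect b = 0 := by
    simp only [defect, habs, stdSimplex.sum_eq_one, sub_self, abs_zero]
  ext j
  change weight b j / ∑ k, weight b k = b j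
  simp only [weight, habs, hdefect, add_zero, stdSimplex.sum_eq_one, div_one]

lemma norm_toLp_stdSimplex_le_one {ι : Type*} [Fintype ι] (b : stdSimplex ℝ ι) :
    ‖WithLp.toLp 2 (b : ι → ℝ)‖ ≤ 1 := by
  rw [EuclideanSpace.norm_eq, Real.sqrt_le_one, ← stdSimplex.sum_eq_one b]
  refine Finset.sum_le_sum fun j _ => ?_
  rw [Real.norm_eq_abs, sq_abs]
  exact pow_le_of_le_one (stdSimplex.zero_le b j) (stdSimplex.le_one b j) two_ne_zero

lemma nonempty_retract_topSimplex_disk (n : ℕ) :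
    Nonempty (Retract (topSimplex n) (disk (n + 1))) := by
  obtain ⟨r, hr⟩ := exists_retraction_stdSimplex (Fin (n + 1))
  let incl : topSimplex n ⟶ disk (n + 1) := TopCat.ofHom
    ⟨fun b => ⟨WithLp.toLp 2 b, mem_closedBall_zero_iff.2 (norm_toLp_stdSimplex_le_one b)⟩,
      ((PiLp.continuous_toLp 2 _).comp continuous_subtype_val).subtype_mk _⟩
  let retr : disk (n + 1) ⟶ topSimplex n := TopCat.ofHom
    (r.comp ⟨fun x => x.1.ofLp, (PiLp.continuous_ofLp 2 _).comp continuous_subtype_val⟩)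
  exact ⟨⟨incl, retr, TopCat.hom_ext (ContinuousMap.ext hr)⟩⟩

theorem nonempty_retractArrow_hornInclusion_diskInclusion {n : ℕ} (i : Fin (n + 2)) :
    Nonempty (RetractArrow (hornInclusion i) (diskInclusion (n + 2))) := by
  obtain ⟨h⟩ := nonempty_retract_topSimplex_disk (n + 1)
  exact ⟨(hornRetractArrowCylinder i).trans (cylinderRetractArrow h)⟩

/-- The largest `ε` such that any `n + 1` numbers in `[ε, 3ε]` are the coordinates `b 1, …,
b (n + 1)` of a point `b` of the topological `(n + 1)`-simplex. -/
noncomputable def cubeScale (n : ℕ) : unitInterval :=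
  ⟨1 / (3 * (n + 1)), by positivity, by
    rw [div_le_one (by positivity)]
    linarith [n.cast_nonneg (α := ℝ)]⟩

lemma cubeScale_pos (n : ℕ) : (0 : ℝ) < cubeScale n := by
  change (0 : ℝ) < 1 / (3 * (n + 1))
  positivity

lemma sum_le_one_of_forall_le_cubeScale_mul_three {n : ℕ} {v : Fin (n + 1) → ℝ}
    (hv : ∀ k, v k ≤ cubeScale n * 3) : ∑ k, v k ≤ 1 := by
  calc ∑ k, v k ≤ ∑ _k : Fin (n + 1), (cubeScale n * 3 : ℝ) := Finset.sum_le_sum fun k _ => hv k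
    _ = (n + 1) * (1 / (3 * (n + 1)) * 3) := by
      rw [Finset.sum_const, Finset.card_univ, Fintype.card_fin, nsmul_eq_mul, Nat.cast_succ]
      rfl
    _ = 1 := by field_simp

lemma abs_disk_apply_le_one {n : ℕ} (x : disk n) (k : Fin n) : |x.1 k| ≤ 1 :=
  (PiLp.norm_apply_le x.1 k).trans (mem_closedBall_zero_iff.1 x.2)

/-- The coordinates of `diskToSimplex x` other than the `0`-th. The first one does not depend on
`x`; it serves as the origin from which `diskCoordinates` measures the others. -/
noncomputable def cubeCoordinates {n : ℕ} (x : disk n) (k : Fin (n + 1)) : ℝ :=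
  cubeScale n * (2 + (Fin.cons 0 x.1.ofLp : Fin (n + 1) → ℝ) k)

lemma cubeCoordinates_mem_Icc {n : ℕ} (x : disk n) (k : Fin (n + 1)) :
    cubeCoordinates x k ∈ Set.Icc (cubeScale n : ℝ) (cubeScale n * 3) := by
  have hx : |(Fin.cons 0 x.1.ofLp : Fin (n + 1) → ℝ) k| ≤ 1 := by
    cases k using Fin.cases with
    | zero => simp
    | succ k => exact abs_disk_apply_le_one x k
  obtain ⟨h₁, h₂⟩ := abs_le.1 hx
  exact ⟨le_mul_of_one_le_right (cubeScale_pos n).le (by linarith),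
    mul_le_mul_of_nonneg_left (by linarith) (cubeScale_pos n).le⟩

lemma continuous_cubeCoordinates (n : ℕ) : Continuous (cubeCoordinates (n := n)) := by
  have hx : Continuous fun x : disk n => x.1.ofLp :=
    (PiLp.continuous_ofLp 2 _).comp continuous_subtype_val
  have hcons : Continuous fun x : disk n => (Fin.cons 0 x.1.ofLp : Fin (n + 1) → ℝ) :=
    continuous_const.finCons hx
  exact continuous_pi fun k =>
    continuous_const.mul (continuous_const.add ((continuous_apply k).comp hcons))

/-- An affine embedding of the disk into the topological simplex, away from `topHorn 0`. -/
noncomputable def diskToSimplex {n : ℕ} (x : disk n) : stdSimplex ℝ (Fin (n + 2)) :=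
  ⟨Fin.cons (1 - ∑ k, cubeCoordinates x k) (cubeCoordinates x), by
    constructor
    · intro j
      cases j using Fin.cases with
      | zero =>
        exact sub_nonneg.2 (sum_le_one_of_forall_le_cubeScale_mul_three fun k =>
          (cubeCoordinates_mem_Icc x k).2)
      | succ k => exact (cubeScale_pos n).le.trans (cubeCoordinates_mem_Icc x k).1
    · simp [Fin.sum_univ_succ]⟩

lemma continuous_diskToSimplex (n : ℕ) : Continuous (diskToSimplex (n := n)) := by
  refine Continuous.subtype_mk ?_ _
  have h := continuous_cubeCoordinates n
  have hsum : Continuous fun x : disk n => ∑ k, cubeCoordinates x k :=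
    continuous_finsetSum _ fun k _ => (continuous_apply k).comp h
  exact (continuous_const.sub hsum).finCons h

lemma cubeScale_le_height_diskToSimplex {n : ℕ} (x : disk n) :
    cubeScale n ≤ height 0 (diskToSimplex x) := by
  refine Subtype.coe_le_coe.1 ((le_height_iff 0).2 fun j hj => ?_)
  obtain ⟨k, rfl⟩ := j.eq_succ_of_ne_zero hj
  exact (cubeCoordinates_mem_Icc x k).1

/-- A left inverse of `diskToSimplex` which is constant along the lines followed by `slide 0`. -/
noncomputable def diskCoordinates {n : ℕ} (b : stdSimplex ℝ (Fin (n + 2))) :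
    EuclideanSpace ℝ (Fin n) :=
  WithLp.toLp 2 fun k => (b k.succ.succ - b 1) / cubeScale n

lemma continuous_diskCoordinates (n : ℕ) : Continuous (diskCoordinates (n := n)) :=
  (PiLp.continuous_toLp 2 _).comp <| continuous_pi fun _ =>
    ((continuous_stdSimplex_apply _).sub (continuous_stdSimplex_apply _)).div_const _

lemma diskCoordinates_slide {n : ℕ} (b : stdSimplex ℝ (Fin (n + 2))) (t : unitInterval) :
    diskCoordinates (slide 0 b t) = diskCoordinates b := by
  ext k
  simp only [diskCoordinates, slide_apply_of_ne 0 b t (Fin.succ_ne_zero _),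
    slide_apply_of_ne 0 b t one_ne_zero, sub_sub_sub_cancel_right]

lemma diskCoordinates_diskToSimplex {n : ℕ} (x : disk n) :
    diskCoordinates (diskToSimplex x) = x.1 := by
  ext k
  have hk : diskToSimplex x k.succ.succ = cubeScale n * (2 + x.1 k) := rfl
  have h₁ : diskToSimplex x 1 = cubeScale n * (2 + 0) := rfl
  change (diskToSimplex x k.succ.succ - diskToSimplex x 1) / cubeScale n = x.1 k
  rw [hk, h₁, ← mul_sub, add_sub_add_left_eq_sub, sub_zero,
    mul_div_cancel_left₀ _ (cubeScale_pos n).ne']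

/-- The embedding of the cylinder over the disk into the simplex which multiplies heights by
`cubeScale n`. -/
noncomputable def diskCylinderToSimplex {n : ℕ} (p : disk n × unitInterval) :
    stdSimplex ℝ (Fin (n + 2)) :=
  slide 0 (diskToSimplex p.1) (cubeScale n * p.2)

lemma continuous_diskCylinderToSimplex (n : ℕ) : Continuous (diskCylinderToSimplex (n := n)) :=
  (continuous_slide 0).comp <| ((continuous_diskToSimplex n).comp continuous_fst).prodMk
    (continuous_const.mul continuous_snd)

lemma height_diskCylinderToSimplex {n : ℕ} (p : disk n × unitInterval) :
    height 0 (diskCylinderToSimplex p) = cubeScale n * p.2 := by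
  rw [diskCylinderToSimplex, height_slide]
  exact min_eq_right (unitInterval.mul_le_left.trans (cubeScale_le_height_diskToSimplex p.1))

lemma diskCoordinates_diskCylinderToSimplex {n : ℕ} (p : disk n × unitInterval) :
    diskCoordinates (diskCylinderToSimplex p) = p.1.1 := by
  rw [diskCylinderToSimplex, diskCoordinates_slide, diskCoordinates_diskToSimplex]

lemma exists_retraction_closedBall {E : Type*} [NormedAddCommGroup E] [NormedSpace ℝ E]
    [FiniteDimensional ℝ E] (c : E) {ρ : ℝ} (hρ : 0 < ρ) :
    ∃ r : C(E, Metric.closedBall c ρ), ∀ x : Metric.closedBall c ρ, r x = x := by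
  have : TietzeExtension (Metric.closedBall c ρ) :=
    Metric.instTietzeExtensionClosedBall ℝ c hρ
  obtain ⟨r, hr⟩ := (ContinuousMap.id (Metric.closedBall c ρ)).exists_restrict_eq
    Metric.isClosed_closedBall
  exact ⟨r, DFunLike.congr_fun hr⟩

/-- The height of a point in units of `cubeScale n`, truncated at `1`. -/
noncomputable def relativeHeight {n : ℕ} (b : stdSimplex ℝ (Fin (n + 2))) : unitInterval :=
  Set.projIcc 0 1 zero_le_one (height 0 b / cubeScale n : ℝ)

lemma continuous_relativeHeight (n : ℕ) : Continuous (relativeHeight (n := n)) :=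
  continuous_projIcc.comp
    ((continuous_subtype_val.comp (continuous_height 0)).div_const _)

lemma relativeHeight_eq {n : ℕ} {b : stdSimplex ℝ (Fin (n + 2))} {t : unitInterval}
    (h : height 0 b = cubeScale n * t) : relativeHeight b = t := by
  rw [relativeHeight, h, Set.Icc.coe_mul, mul_div_cancel_left₀ _ (cubeScale_pos n).ne',
    Set.projIcc_val]

theorem nonempty_retractArrow_diskInclusion_hornInclusion (n : ℕ) :
    Nonempty (RetractArrow (diskInclusion n) (hornInclusion (0 : Fin (n + 2)))) := by
  obtain ⟨r, hr⟩ := exists_retraction_closedBall (0 : EuclideanSpace ℝ (Fin n)) one_pos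
  let back : C(stdSimplex ℝ (Fin (n + 2)), disk n) := r.comp ⟨_, continuous_diskCoordinates n⟩
  have hback (p : disk n × unitInterval) : back (diskCylinderToSimplex p) = p.1 :=
    (congrArg r (diskCoordinates_diskCylinderToSimplex p)).trans (hr p.1)
  have hbottom (x : disk n) : diskCylinderToSimplex (x, 0) ∈ topHorn 0 := by
    rw [mem_topHorn_iff_height_eq_zero, height_diskCylinderToSimplex, mul_zero]
  have hhorn (b : topHorn (0 : Fin (n + 2))) : relativeHeight b.1 = 0 :=
    relativeHeight_eq (by rw [(mem_topHorn_iff_height_eq_zero 0).1 b.2, mul_zero])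
  let incl : Arrow.mk (diskInclusion n) ⟶ Arrow.mk (hornInclusion (0 : Fin (n + 2))) :=
    Arrow.homMk
      (TopCat.ofHom ⟨fun x => ⟨diskCylinderToSimplex (x, 0), hbottom x⟩,
        ((continuous_diskCylinderToSimplex n).comp (by fun_prop)).subtype_mk _⟩)
      (TopCat.ofHom ⟨diskCylinderToSimplex, continuous_diskCylinderToSimplex n⟩) rfl
  let retr : Arrow.mk (hornInclusion (0 : Fin (n + 2))) ⟶ Arrow.mk (diskInclusion n) :=
    Arrow.homMk
      (TopCat.ofHom (back.comp ⟨Subtype.val, continuous_subtype_val⟩))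
      (TopCat.ofHom (back.prodMk ⟨relativeHeight, continuous_relativeHeight n⟩))
      (TopCat.hom_ext (ContinuousMap.ext fun b => Prod.ext rfl (hhorn b).symm))
  refine ⟨⟨incl, retr, Arrow.hom_ext _ _ ?_ ?_⟩⟩
  · exact TopCat.hom_ext (ContinuousMap.ext fun x => hback (x, 0))
  · exact TopCat.hom_ext (ContinuousMap.ext fun p =>
      Prod.ext (hback p) (relativeHeight_eq (height_diskCylinderToSimplex p)))

end Retracts

end HopfModel

open HopfModel in
/-- A continuous map `f : X → Y` is a Serre fibration if and only if the
induced map `S(f) : S(X) → S(Y)` between singular simplicial sets is a Kan fibration. -/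
theorem isSerreFibration_iff_isKanFibration_toSSet_map
    {X Y : TopCat} (f : X ⟶ Y) :
    IsSerreFibration f ↔ IsKanFibration (TopCat.toSSet.map f) := by
  constructor
  · intro hf n i
    rw [hasLiftingProperty_horn_ι_toSSet_map_iff]
    obtain ⟨h⟩ := nonempty_retractArrow_hornInclusion_diskInclusion i
    have := hf (n + 2)
    exact h.leftLiftingProperty f
  · intro hf n
    obtain ⟨h⟩ := nonempty_retractArrow_diskInclusion_hornInclusion n
    have := (hasLiftingProperty_horn_ι_toSSet_map_iff 0 f).1 (hf n 0)
    exact h.leftLiftingProperty f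
end

section
/- The maps ηₙ : (S²)ₙ → (GΓℤ(2))_{n−1} defined by η₁(*) = e, η₂(y) = τ(1) (where 1 denotes the generator of Γ₂ℤ(2) ≅ ℤ), and, for n ≥ 3 and a degenerate simplex written in canonical form s_{j_{n−2}}⋯s_{j₁}y with j_{n−2} > ⋯ > j₁, ηₙ(s_{j_{n−2}}⋯s_{j₁}y) = e if j₁ = 0 and ηₙ(s_{j_{n−2}}⋯s_{j₁}y) = τ(s_{j_{n−2}}⋯s_{j₁}1) otherwise, constitute a well-defined twisting function η : S² → GΓℤ(2). -/
open CategoryTheory Simplicial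

namespace HopfModel

/-- The underlying simplicial set of a simplicial group. -/
def uSSet (H : SimplicialObject GrpCat) : SSet := H ⋙ forget GrpCat

/-- The `i`-th face map of a simplicial group, as a group homomorphism. -/
def δHom (H : SimplicialObject GrpCat) {n : ℕ} (i : Fin (n + 2)) :
    (H _⦋n + 1⦌ : Type) →* (H _⦋n⦌ : Type) := (H.δ i).hom

/-- The `i`-th degeneracy map of a simplicial group, as a group homomorphism. -/
def σHom (H : SimplicialObject GrpCat) {n : ℕ} (i : Fin (n + 1)) :
    (H _⦋n⦌ : Type) →* (H _⦋n + 1⦌ : Type) := (H.σ i).hom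

/-- A twisting function `ζ : B → H`, i.e. a family of maps `ζₙ : Bₙ → H_{n-1}` (`n ≥ 1`)
satisfying `∂₀ζ(b) = (ζ(∂₀b))⁻¹·ζ(∂₁b)`, `∂ᵢζ(b) = ζ(∂_{i+1}b)` for `i > 0`,
`sᵢζ(b) = ζ(s_{i+1}b)` for `i ≥ 0`, and `ζ(s₀b) = e`. -/
structure TwistingFunction (B : SSet) (H : SimplicialObject GrpCat) where
  map : ∀ n : ℕ, B _⦋n + 1⦌ → H _⦋n⦌
  map_δ₀ : ∀ (n : ℕ) (b : B _⦋n + 2⦌),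
    H.δ 0 (map (n + 1) b) = (map n (B.δ 0 b))⁻¹ * map n (B.δ 1 b)
  map_δ : ∀ (n : ℕ) (j : Fin (n + 1)) (b : B _⦋n + 2⦌),
    H.δ j.succ (map (n + 1) b) = map n (B.δ j.succ.succ b)
  map_σ : ∀ (n : ℕ) (i : Fin (n + 1)) (b : B _⦋n + 1⦌),
    H.σ i (map n b) = map (n + 1) (B.σ i.succ b)
  map_σ₀ : ∀ (n : ℕ) (b : B _⦋n⦌), map n (B.σ 0 b) = 1

/-- A left action of a simplicial group `H` on a simplicial set `F`:
a degreewise group action commuting with faces and degeneracies. -/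
structure SimplicialAction (H : SimplicialObject GrpCat) (F : SSet) where
  act : ∀ n : ℕ, H _⦋n⦌ → F _⦋n⦌ → F _⦋n⦌
  one_act : ∀ (n : ℕ) (f : F _⦋n⦌), act n 1 f = f
  mul_act : ∀ (n : ℕ) (g h : H _⦋n⦌) (f : F _⦋n⦌),
    act n (g * h) f = act n g (act n h f)
  δ_act : ∀ (n : ℕ) (i : Fin (n + 2)) (g : H _⦋n + 1⦌) (f : F _⦋n + 1⦌),
    F.δ i (act (n + 1) g f) = act n (H.δ i g) (F.δ i f)
  σ_act : ∀ (n : ℕ) (i : Fin (n + 1)) (g : H _⦋n⦌) (f : F _⦋n⦌),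
    F.σ i (act n g f) = act (n + 1) (H.σ i g) (F.σ i f)

/-- A simplicial group acting on (the underlying simplicial set of) itself
by left multiplication. -/
def leftMulAction (H : SimplicialObject GrpCat) : SimplicialAction H (uSSet H) where
  act n g h := g * (show (H _⦋n⦌ : Type) from h)
  one_act n f := one_mul (show (H _⦋n⦌ : Type) from f)
  mul_act n g h f := mul_assoc g h (show (H _⦋n⦌ : Type) from f)
  δ_act n i g f := map_mul (δHom H i) g (show (H _⦋n + 1⦌ : Type) from f)
  σ_act n i g f := map_mul (σHom H i) g (show (H _⦋n⦌ : Type) from f)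

/-- The data exhibiting a simplicial set `P`, together with a map `p : P ⟶ B`, as
the twisted cartesian product `F ×_ζ B` with its projection onto `B`:
`Pₙ ≅ Fₙ × Bₙ`, `∂₀(f,b) = (ζ(b)·∂₀f, ∂₀b)`, `∂ᵢ(f,b) = (∂ᵢf, ∂ᵢb)` for `i > 0`,
`sᵢ(f,b) = (sᵢf, sᵢb)`, and `p(f,b) = b`. -/
structure TCP (H : SimplicialObject GrpCat) (F B : SSet) (A : SimplicialAction H F)
    (ζ : TwistingFunction B H) (P : SSet) (p : P ⟶ B) where
  e : ∀ n : ℕ, P _⦋n⦌ ≃ F _⦋n⦌ × B _⦋n⦌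
  e_δ₀ : ∀ (n : ℕ) (x : P _⦋n + 1⦌),
    e n (P.δ 0 x) =
      (A.act n (ζ.map n (e (n + 1) x).2) (F.δ 0 (e (n + 1) x).1), B.δ 0 (e (n + 1) x).2)
  e_δ : ∀ (n : ℕ) (j : Fin (n + 1)) (x : P _⦋n + 1⦌),
    e n (P.δ j.succ x) = (F.δ j.succ (e (n + 1) x).1, B.δ j.succ (e (n + 1) x).2)
  e_σ : ∀ (n : ℕ) (i : Fin (n + 1)) (x : P _⦋n⦌),
    e (n + 1) (P.σ i x) = (F.σ i (e n x).1, B.σ i (e n x).2)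
  proj : ∀ (n : ℕ) (x : P _⦋n⦌),
    p.app (Opposite.op (SimplexCategory.mk n)) x = (e n x).2

end HopfModel

namespace HopfModel

/-- The chain complex `ℤ(2)` of abelian groups: one copy of `ℤ` in degree `2`
and `0` elsewhere. -/
noncomputable def Z2 : ChainComplex AddCommGrpCat ℕ :=
  (HomologicalComplex.single AddCommGrpCat (ComplexShape.down ℕ) 2).obj (AddCommGrpCat.of ℤ)

/-- The simplicial abelian group `Γℤ(2)` corresponding to the chain complex `ℤ(2)`
under the Dold–Kan correspondence. -/
noncomputable def GammaZ2 : SimplicialObject AddCommGrpCat :=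
  AlgebraicTopology.DoldKan.Γ₀.obj Z2

/-- The underlying simplicial set of `Γℤ(2)`. -/
noncomputable def GammaZ2SSet : SSet := GammaZ2 ⋙ forget AddCommGrpCat

/-- The relations `s₀x = e` (`x ∈ Kₙ`) defining the loop group `G(K)ₙ`. -/
def loopRels (K : SSet) (n : ℕ) : Set (FreeGroup (K _⦋n + 1⦌)) :=
  Set.range fun x : K _⦋n⦌ => FreeGroup.of (K.σ 0 x)

end HopfModel

namespace HopfModel

/-- `S2` is the minimal simplicial model of the 2-sphere, with nondegenerate
`2`-simplex `y`: there is exactly one `0`-simplex and one `1`-simplex, every `2`-simplex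
other than `y` is degenerate, `y` itself is nondegenerate, and every simplex in
dimension `≥ 3` is degenerate. -/
structure IsMinimalS2 (S2 : SSet) (y : S2 _⦋2⦌) : Prop where
  nonempty₀ : Nonempty (S2 _⦋0⦌)
  subsingleton₀ : Subsingleton (S2 _⦋0⦌)
  subsingleton₁ : Subsingleton (S2 _⦋1⦌)
  two_simplices : ∀ z : S2 _⦋2⦌, z = y ∨ ∃ w : S2 _⦋1⦌, z = S2.σ 0 w
  nondegen₀ : ∀ w : S2 _⦋1⦌, y ≠ S2.σ 0 w
  nondegen₁ : ∀ w : S2 _⦋1⦌, y ≠ S2.σ 1 w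
  degen_above : ∀ (n : ℕ) (z : S2 _⦋n + 3⦌),
    ∃ (i : Fin (n + 3)) (w : S2 _⦋n + 2⦌), z = S2.σ i w

end HopfModel


/-!
A simplex `h ∈ Hₙ` defines a twisting function on `Δ[n + 1]` with value `h` on the top simplex.
If all faces of `h` are trivial, it is trivial on every simplex that does not map onto `Δ[n + 1]`.
These are the only simplices identified in a simplicial set generated by one nondegenerate
`(n + 1)`-simplex, so the twisting function descends to it. This applies to `h = τ(1)`, whose faces
are products of elements `τ(x)^{±1}` with `x ∈ Γ₁ℤ(2) = 0`. Uniqueness holds because the twisting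
identities force the values on degenerate simplices.
-/

namespace HopfModel

open Opposite SSet SSet.stdSimplex

universe u

section Simplices

variable {n m : ℕ}

lemma epi_of_epi_δ_zero_comp_comp_σ_zero {α : ⦋m + 1⦌ ⟶ ⦋n + 1⦌} (h₀ : α 0 = 0) (h₁ : α 1 ≠ 0)
    (hα : Epi (SimplexCategory.δ 0 ≫ α ≫ SimplexCategory.σ 0)) : Epi α := by
  rw [SimplexCategory.epi_iff_surjective] at hα ⊢
  intro k
  cases k using Fin.cases with
  | zero => exact ⟨0, h₀⟩
  | succ k =>
    obtain ⟨j, hj : Fin.predAbove 0 (α j.succ) = k⟩ := hα k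
    have hj₀ : α j.succ ≠ 0 := fun h ↦ h₁ <| Fin.le_zero_iff.mp <|
      h ▸ α.toOrderHom.monotone (Fin.succ_le_succ_iff.mpr (Fin.zero_le j))
    obtain ⟨l, hl⟩ := Fin.exists_succ_eq.mpr hj₀
    rw [← hl, Fin.predAbove_zero_succ] at hj
    exact ⟨j.succ, hl.symm.trans (congrArg Fin.succ hj)⟩

lemma eq_or_not_epi_of_map_op_eq {X : SSet.{u}} {x : X _⦋n⦌} (hx : x ∈ X.nonDegenerate n)
    {α β : ⦋m⦌ ⟶ ⦋n⦌} (h : X.map α.op x = X.map β.op x) : α = β ∨ (¬ Epi α ∧ ¬ Epi β) := by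
  by_cases hα : Epi α
  · exact Or.inl (X.unique_nonDegenerate_map _ α ⟨x, hx⟩ rfl β ⟨x, hx⟩ h)
  by_cases hβ : Epi β
  · exact Or.inl (X.unique_nonDegenerate_map _ β ⟨x, hx⟩ rfl α ⟨x, hx⟩ h.symm).symm
  exact Or.inr ⟨hα, hβ⟩

lemma epi_yonedaEquiv_symm_iff {X : SSet.{u}} (x : X _⦋n⦌) :
    Epi (yonedaEquiv.symm x : Δ[n] ⟶ X) ↔ Subcomplex.ofSimplex x = ⊤ := by
  rw [← Subcomplex.range_eq_top_iff, Subcomplex.range_eq_ofSimplex, Equiv.apply_symm_apply]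

lemma exists_σ_eq_of_notMem_nonDegenerate {X : SSet.{u}} {x : X _⦋n + 1⦌}
    (hx : x ∉ X.nonDegenerate (n + 1)) : ∃ (i : Fin (n + 1)) (w : X _⦋n⦌), X.σ i w = x := by
  rwa [← mem_degenerate_iff_notMem_nonDegenerate, degenerate_eq_iUnion_range_σ,
    Set.mem_iUnion] at hx

end Simplices

variable {H : SimplicialObject GrpCat}

lemma map_op_map_op_apply {a b c : SimplexCategory} (α : a ⟶ b) (β : b ⟶ c) (h : H.obj (op c)) :
    H.map α.op (H.map β.op h) = H.map (α ≫ β).op h := by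
  rw [op_comp, H.map_comp, ConcreteCategory.comp_apply]

lemma map_op_eq_one_of_not_epi {n : ℕ} {h : H _⦋n + 1⦌} (hδ : ∀ i, H.δ i h = 1)
    {a : SimplexCategory} {α : a ⟶ ⦋n + 1⦌} (hα : ¬ Epi α) : H.map α.op h = 1 := by
  rw [SimplexCategory.epi_iff_surjective] at hα
  obtain ⟨i, β, rfl⟩ := SimplexCategory.eq_comp_δ_of_not_surjective α hα
  rw [← map_op_map_op_apply]
  exact (congrArg (H.map β.op) (hδ i)).trans (map_one (H.map β.op).hom)

namespace TwistingFunction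

section StdSimplex

variable {n : ℕ}

/-- The value on `x` of the twisting function `stdSimplex h` on `Δ[n + 1]`. For a degeneracy
`x = s_{j_k}⋯s_{j₁}ι` of the top simplex `ι`, the condition `x 1 = 0` says that `j₁ = 0`, and
otherwise the value is `s_{j_k - 1}⋯s_{j₁ - 1}h`. -/
noncomputable def stdSimplexMap (h : H _⦋n⦌) {m : ℕ} (x : (Δ[n + 1] : SSet.{u}) _⦋m + 1⦌) :
    H _⦋m⦌ :=
  if x 0 = 0 ∧ x 1 ≠ 0 then
    H.map (SimplexCategory.δ 0 ≫ objEquiv x ≫ SimplexCategory.σ 0).op h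
  else 1

lemma map_op_stdSimplexMap (h : H _⦋n⦌) {m m' : ℕ} {x : (Δ[n + 1] : SSet.{u}) _⦋m + 1⦌}
    {x' : (Δ[n + 1] : SSet.{u}) _⦋m' + 1⦌} {α : ⦋m'⦌ ⟶ ⦋m⦌} {β : ⦋m' + 1⦌ ⟶ ⦋m + 1⦌}
    (hβ : SimplexCategory.δ 0 ≫ β = α ≫ SimplexCategory.δ 0)
    (hx' : (Δ[n + 1] : SSet.{u}).map β.op x = x')
    (hx : x' 0 = 0 ∧ x' 1 ≠ 0 ↔ x 0 = 0 ∧ x 1 ≠ 0) :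
    H.map α.op (stdSimplexMap h x) = stdSimplexMap h x' := by
  subst hx'
  simp only [stdSimplexMap, hx]
  split_ifs
  · rw [map_op_map_op_apply, map_apply, Equiv.apply_symm_apply, Quiver.Hom.unop_op,
      Category.assoc, ← Category.assoc _ β, hβ, Category.assoc]
  · exact map_one (H.map α.op).hom

lemma δ_zero_stdSimplexMap (h : H _⦋n⦌) {m : ℕ} (x : (Δ[n + 1] : SSet.{u}) _⦋m + 2⦌) :
    H.δ 0 (stdSimplexMap h x) = (stdSimplexMap h ((Δ[n + 1] : SSet.{u}).δ 0 x))⁻¹ *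
      stdSimplexMap h ((Δ[n + 1] : SSet.{u}).δ 1 x) := by
  have hmono := monotone_apply x
  by_cases h₁ : x 1 = 0
  · have h₀ : x 0 = 0 := Fin.le_zero_iff.mp (h₁ ▸ hmono (Fin.zero_le 1))
    have hδ : (Δ[n + 1] : SSet.{u}).δ 0 x = (Δ[n + 1] : SSet.{u}).δ 1 x := by
      ext j : 1
      cases j using Fin.cases with
      | zero => exact h₁.trans h₀.symm
      | succ j => rfl
    rw [hδ, inv_mul_cancel, stdSimplexMap, if_neg (fun h ↦ h.2 h₁)]
    exact map_one (H.δ 0).hom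
  · have h₂ : x (Fin.succ 1) ≠ 0 := fun h₂ ↦
      h₁ (Fin.le_zero_iff.mp (h₂ ▸ hmono (Fin.castSucc_le_succ (1 : Fin (m + 2)))))
    have hδ₀ : stdSimplexMap h ((Δ[n + 1] : SSet.{u}).δ 0 x) = 1 := if_neg fun h ↦ h₁ h.1
    rw [hδ₀, inv_one, one_mul]
    exact map_op_stdSimplexMap h (SimplexCategory.δ_comp_δ le_rfl) rfl
      (and_congr_right fun _ ↦ iff_of_true h₂ h₁)

/-- The twisting function on `Δ[n + 1]` with value `h` on the top simplex that corresponds to the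
simplex `(h, 1, …, 1)` of the classifying complex `W̄H`. -/
noncomputable def stdSimplex (h : H _⦋n⦌) : TwistingFunction (Δ[n + 1] : SSet.{u}) H where
  map _ x := stdSimplexMap h x
  map_δ₀ _ x := δ_zero_stdSimplexMap h x
  map_δ _ _ _ := map_op_stdSimplexMap h (SimplexCategory.δ_comp_δ (Fin.zero_le _)) rfl Iff.rfl
  map_σ _ i _ :=
    map_op_stdSimplexMap h (SimplexCategory.δ_comp_σ_of_le (Fin.zero_le i.castSucc)) rfl Iff.rfl
  map_σ₀ _ _ := if_neg fun h ↦ h.2 h.1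

lemma stdSimplex_map_id (h : H _⦋n⦌) :
    (stdSimplex.{u} h).map n (objEquiv.symm (𝟙 ⦋n + 1⦌)) = h := by
  have hσ : SimplexCategory.δ 0 ≫ 𝟙 ⦋n + 1⦌ ≫ SimplexCategory.σ 0 = 𝟙 ⦋n⦌ := by
    rw [Category.id_comp]
    exact SimplexCategory.δ_comp_σ_self (i := 0)
  have hx : (objEquiv.{u}.symm (𝟙 ⦋n + 1⦌)) 0 = 0 ∧ (objEquiv.{u}.symm (𝟙 ⦋n + 1⦌)) 1 ≠ 0 :=
    ⟨rfl, Fin.succ_ne_zero (0 : Fin (n + 1))⟩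
  dsimp only [stdSimplex, stdSimplexMap]
  rw [if_pos hx, Equiv.apply_symm_apply, hσ, op_id, H.map_id, ConcreteCategory.id_apply]

lemma stdSimplex_map_eq_one {h : H _⦋n + 1⦌} (hδ : ∀ i, H.δ i h = 1) {m : ℕ}
    {x : (Δ[n + 2] : SSet.{u}) _⦋m + 1⦌} (hx : ¬ Epi (objEquiv x)) :
    (stdSimplex h).map m x = 1 :=
  ite_eq_right_iff.mpr fun h₀₁ ↦ map_op_eq_one_of_not_epi hδ fun hepi ↦
    hx (epi_of_epi_δ_zero_comp_comp_σ_zero h₀₁.1 h₀₁.2 hepi)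

end StdSimplex

variable {X Y : SSet.{u}}

lemma exists_map_app_eq (f : X ⟶ Y) [Epi f] (ζ : TwistingFunction X H)
    (hζ : ∀ (n : ℕ) (x x' : X _⦋n + 1⦌), f.app _ x = f.app _ x' → ζ.map n x = ζ.map n x') :
    ∃ η : TwistingFunction Y H, ∀ (n : ℕ) (x : X _⦋n + 1⦌), η.map n (f.app _ x) = ζ.map n x := by
  have hf (n : ℕ) : Function.Surjective (f.app (op ⦋n⦌)) :=
    (epi_iff_surjective _).mp inferInstance
  let φ (n : ℕ) (y : Y _⦋n + 1⦌) : H _⦋n⦌ := ζ.map n (Function.surjInv (hf _) y)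
  have hφ (n : ℕ) (x : X _⦋n + 1⦌) : φ n (f.app _ x) = ζ.map n x :=
    hζ n _ _ (Function.surjInv_eq _ _)
  have hδ (n : ℕ) (i : Fin (n + 3)) (x : X _⦋n + 2⦌) :
      φ n (Y.δ i (f.app _ x)) = ζ.map n (X.δ i x) := by
    rw [← hφ, δ_naturality_apply]
  have hσ (n : ℕ) (i : Fin (n + 1)) (x : X _⦋n⦌) :
      φ n (Y.σ i (f.app _ x)) = ζ.map n (X.σ i x) := by
    rw [← hφ, σ_naturality_apply]
  refine ⟨⟨φ, fun n y ↦ ?_, fun n j y ↦ ?_, fun n i y ↦ ?_, fun n y ↦ ?_⟩, hφ⟩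
  all_goals obtain ⟨x, rfl⟩ := hf _ y
  · rw [hφ, hδ, hδ, ζ.map_δ₀]
  · rw [hφ, hδ, ζ.map_δ]
  · rw [hφ, hσ, ζ.map_σ]
  · rw [hσ, ζ.map_σ₀]

theorem exists_map_eq_of_ofSimplex_eq_top {n : ℕ} {x : X _⦋n + 2⦌}
    (hx : x ∈ X.nonDegenerate (n + 2)) (hX : Subcomplex.ofSimplex x = ⊤)
    {h : H _⦋n + 1⦌} (hδ : ∀ i, H.δ i h = 1) :
    ∃ η : TwistingFunction X H, η.map (n + 1) x = h := by
  have := (epi_yonedaEquiv_symm_iff x).mpr hX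
  obtain ⟨η, hη⟩ := exists_map_app_eq (yonedaEquiv.symm x) (stdSimplex h) fun m a b hab ↦ by
    obtain hab | ⟨ha, hb⟩ := eq_or_not_epi_of_map_op_eq hx hab
    · rw [objEquiv.injective hab]
    · rw [stdSimplex_map_eq_one hδ ha, stdSimplex_map_eq_one hδ hb]
  refine ⟨η, ?_⟩
  rw [← stdSimplex_map_id h, ← hη, yonedaEquiv_symm_app_objEquiv_symm, op_id, X.map_id, id_apply]

lemma eq_of_forall_nonDegenerate {ζ η : TwistingFunction X H}
    (h : ∀ (n : ℕ), ∀ x ∈ X.nonDegenerate (n + 1), ζ.map n x = η.map n x) : ζ = η := by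
  suffices ∀ (n : ℕ) (x : X _⦋n + 1⦌), ζ.map n x = η.map n x by
    cases ζ
    cases η
    congr
    exact funext₂ this
  intro n
  induction n with
  | zero =>
    intro x
    by_cases hx : x ∈ X.nonDegenerate 1
    · exact h 0 x hx
    · obtain ⟨i, w, rfl⟩ := exists_σ_eq_of_notMem_nonDegenerate hx
      rw [Fin.fin_one_eq_zero i, ζ.map_σ₀, η.map_σ₀]
  | succ n ih =>
    intro x
    by_cases hx : x ∈ X.nonDegenerate (n + 2)
    · exact h _ x hx
    · obtain ⟨i, w, rfl⟩ := exists_σ_eq_of_notMem_nonDegenerate hx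
      cases i using Fin.cases with
      | zero => rw [ζ.map_σ₀, η.map_σ₀]
      | succ i => rw [← ζ.map_σ, ← η.map_σ, ih]

section Subsingleton

variable {n : ℕ} (ζ : TwistingFunction X H)

lemma map_eq_one_of_subsingleton (hX : Subsingleton (X _⦋n + 1⦌)) (x : X _⦋n + 1⦌) :
    ζ.map n x = 1 := by
  rw [Subsingleton.elim x (X.σ 0 (X.δ 0 x)), ζ.map_σ₀]

lemma δ_map_eq_one_of_subsingleton (hX : Subsingleton (X _⦋n + 1⦌)) (x : X _⦋n + 2⦌)
    (i : Fin (n + 2)) :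
    H.δ i (ζ.map (n + 1) x) = 1 := by
  cases i using Fin.cases with
  | zero => rw [ζ.map_δ₀, ζ.map_eq_one_of_subsingleton hX, ζ.map_eq_one_of_subsingleton hX,
      inv_one, one_mul]
  | succ j => rw [ζ.map_δ, ζ.map_eq_one_of_subsingleton hX]

end Subsingleton

end TwistingFunction

namespace IsMinimalS2

variable {S2 : SSet.{u}} {y : S2 _⦋2⦌}

lemma mem_nonDegenerate (hS2 : IsMinimalS2 S2 y) : y ∈ S2.nonDegenerate 2 := by
  by_contra hy
  obtain ⟨i, w, hw⟩ := exists_σ_eq_of_notMem_nonDegenerate hy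
  fin_cases i
  · exact hS2.nondegen₀ w hw.symm
  · exact hS2.nondegen₁ w hw.symm

lemma nonDegenerate_one (hS2 : IsMinimalS2 S2 y) : S2.nonDegenerate 1 = ∅ := by
  have := hS2.subsingleton₁
  refine Set.eq_empty_of_forall_notMem fun z hz ↦ hz ?_
  rw [Subsingleton.elim z (S2.σ 0 (S2.δ 0 z))]
  exact σ_mem_degenerate ..

lemma nonDegenerate_two (hS2 : IsMinimalS2 S2 y) : S2.nonDegenerate 2 = {y} := by
  refine Set.eq_singleton_iff_unique_mem.mpr ⟨hS2.mem_nonDegenerate, fun z hz ↦ ?_⟩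
  obtain rfl | ⟨w, rfl⟩ := hS2.two_simplices z
  · rfl
  · exact absurd (σ_mem_degenerate ..) hz

lemma nonDegenerate_add_three (hS2 : IsMinimalS2 S2 y) (n : ℕ) :
    S2.nonDegenerate (n + 3) = ∅ := by
  refine Set.eq_empty_of_forall_notMem fun z hz ↦ hz ?_
  obtain ⟨i, w, rfl⟩ := hS2.degen_above n z
  exact σ_mem_degenerate ..

lemma ofSimplex_eq_top (hS2 : IsMinimalS2 S2 y) : Subcomplex.ofSimplex y = ⊤ := by
  refine (Subcomplex.eq_top_iff_contains_nonDegenerate _).mpr fun n z hz ↦ ?_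
  match n with
  | 0 =>
    exact (Subcomplex.mem_ofSimplex_obj_iff ..).mpr
      ⟨SimplexCategory.const _ _ 0, hS2.subsingleton₀.elim _ _⟩
  | 1 => simp [hS2.nonDegenerate_one] at hz
  | 2 =>
    obtain rfl : z = y := by simpa [hS2.nonDegenerate_two] using hz
    exact Subcomplex.mem_ofSimplex_obj z
  | n + 3 => simp [hS2.nonDegenerate_add_three] at hz

lemma twistingFunction_ext (hS2 : IsMinimalS2 S2 y) {ζ η : TwistingFunction S2 H}
    (h : ζ.map 1 y = η.map 1 y) : ζ = η := by
  refine TwistingFunction.eq_of_forall_nonDegenerate fun n z hz ↦ ?_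
  match n with
  | 0 => simp [hS2.nonDegenerate_one] at hz
  | 1 =>
    obtain rfl : z = y := by simpa [hS2.nonDegenerate_two] using hz
    exact h
  | n + 2 => simp [hS2.nonDegenerate_add_three] at hz

end IsMinimalS2

open AlgebraicTopology.DoldKan in
lemma isZero_Γ₀_obj_obj {C : Type*} [Category* C] [Preadditive C] [Limits.HasFiniteCoproducts C]
    {K : ChainComplex C ℕ} {n : ℕ} (hK : ∀ i ≤ n, Limits.IsZero (K.X i)) :
    Limits.IsZero ((Γ₀.obj K).obj (op ⦋n⦌)) := by
  rw [Limits.IsZero.iff_id_eq_zero]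
  refine (Γ₀.splitting K).hom_ext' _ _ fun A ↦ Limits.IsZero.eq_of_src ?_ _ _
  exact hK _ (SimplexCategory.len_le_of_epi A.e)

lemma subsingleton_gammaZ2SSet_one : Subsingleton (GammaZ2SSet _⦋1⦌) :=
  AddCommGrpCat.subsingleton_of_isZero <| isZero_Γ₀_obj_obj fun _ hi ↦
    HomologicalComplex.isZero_single_obj_X _ _ _ _ (Nat.lt_succ_iff.mpr hi).ne

end HopfModel

open HopfModel in
theorem eta_twistingFunction_exists_general {S2 : SSet} {y : S2 _⦋2⦌} (hS2 : IsMinimalS2 S2 y)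
    {H : SimplicialObject GrpCat} {h : H _⦋1⦌} (hδ : ∀ i, H.δ i h = 1) :
    ∃! η : TwistingFunction S2 H, η.map 1 y = h :=
  existsUnique_of_exists_of_unique
    (TwistingFunction.exists_map_eq_of_ofSimplex_eq_top hS2.mem_nonDegenerate
      hS2.ofSimplex_eq_top hδ)
    fun _ _ hη hη' ↦ hS2.twistingFunction_ext (hη.trans hη'.symm)

open HopfModel in
/-- Let `S²` be the minimal simplicial model of the 2-sphere with
nondegenerate `2`-simplex `y`, and let `GK = GΓℤ(2)` be the loop group of `Γℤ(2)` with
canonical twisting function `ζ = τ`. The formulas `η₂(y) = τ(1)` (for `1` a generator of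
`Γ₂ℤ(2) ≅ ℤ`), `η(s₀b) = e` and `ηₙ(s_{j_{n-2}}⋯s_{j₁}y) = τ(s_{j_{n-2}}⋯s_{j₁}1)`
determine a well-defined twisting function `η : S² → GΓℤ(2)`; i.e. there exists a
twisting function `η` with `η₂(y) = τ(1)` (and it is unique, as the remaining values are
forced by the twisting identities). -/
theorem eta_twistingFunction_exists
    (S2 : SSet) (y : S2 _⦋2⦌) (hS2 : IsMinimalS2 S2 y)
    (GK : SimplicialObject GrpCat) (ζ : TwistingFunction GammaZ2SSet GK)
    (ψ : ∀ n : ℕ, PresentedGroup (loopRels GammaZ2SSet n) ≃* (GK _⦋n⦌ : Type))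
    (hψ : ∀ (n : ℕ) (x : GammaZ2SSet _⦋n + 1⦌),
      ψ n (PresentedGroup.of x) = ζ.map n x)
    (g : GammaZ2SSet _⦋2⦌)
    (hg : ∃ e : (GammaZ2 _⦋2⦌ : Type) ≃+ ℤ, e g = 1) :
    ∃ η : TwistingFunction S2 GK, η.map 1 y = ζ.map 1 g :=
  (eta_twistingFunction_exists_general hS2
    (ζ.δ_map_eq_one_of_subsingleton subsingleton_gammaZ2SSet_one g)).exists
end
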